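/- arXiv:1501.04817 — 2 statements merged into one kernel-verified Lean document; each statement's English description precedes it below -/
import Mathlib

section
/- Let m > K ≥ 1, let Φ = I_m be the m×m identity matrix, let x ∈ ℝ^m have x_i = 1 for 1 ≤ i ≤ K and x_i = 0 otherwise, let v = e_m be the m-th standard basis vector, and set y = Φx + v. Then the restricted isometry constant of Φ of order K+1 equals 0, SNR = K, MAR = 1, and the index m ∉ supp(x) attains the maximum of |⟨φ_i, y⟩| over all i ∈ {1,…,m}; consequently there exists a run of OMP on (Φ, y) whose first selected index is t^1 = m ∉ supp(x). In particular, exact support recovery of all K-sparse signals with OMP requires SNR > K. -/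
noncomputable section
open Finset

/-- `Vec n` is `ℝ^n` with the Euclidean (ℓ²) norm. -/
abbrev Vec (n : ℕ) := EuclideanSpace ℝ (Fin n)

/-- The standard inner product `⟨u, v⟩ = ∑ i, u i * v i`. -/
def dot {n : ℕ} (u v : Vec n) : ℝ := ∑ i, u i * v i

/-- The `j`-th column of a matrix, as a Euclidean vector. -/
def col {m n : ℕ} (Φ : Matrix (Fin m) (Fin n) ℝ) (j : Fin n) : Vec m :=
  WithLp.toLp 2 fun i => Φ i j

/-- Matrix-vector multiplication `Φ x`, valued in Euclidean space. -/
def mulVec' {m n : ℕ} (Φ : Matrix (Fin m) (Fin n) ℝ) (x : Vec n) : Vec m :=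
  WithLp.toLp 2 fun i => ∑ j, Φ i j * x j

/-- The support of a vector, as a `Finset`. -/
def suppF {n : ℕ} (x : Vec n) : Finset (Fin n) :=
  Finset.univ.filter fun i => x i ≠ 0

/-- Restriction of a vector to an index set (zero outside the set). -/
def restrict {n : ℕ} (x : Vec n) (S : Finset (Fin n)) : Vec n :=
  WithLp.toLp 2 fun i => if i ∈ S then x i else 0

/-- `RIPConst Φ L δ` : δ is the restricted isometry constant of `Φ` of order `L`,
i.e. the smallest `c ≥ 0` such that `(1-c)‖u‖² ≤ ‖Φu‖² ≤ (1+c)‖u‖²` for all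
`L`-sparse `u`. -/
def RIPConst {m n : ℕ} (Φ : Matrix (Fin m) (Fin n) ℝ) (L : ℕ) (δ : ℝ) : Prop :=
  IsLeast {c : ℝ | 0 ≤ c ∧ ∀ u : Vec n, (suppF u).card ≤ L →
    (1 - c) * ‖u‖ ^ 2 ≤ ‖mulVec' Φ u‖ ^ 2 ∧ ‖mulVec' Φ u‖ ^ 2 ≤ (1 + c) * ‖u‖ ^ 2} δ

/-- Signal-to-noise ratio `‖Φx‖²/‖v‖²`. -/
def SNR {m n : ℕ} (Φ : Matrix (Fin m) (Fin n) ℝ) (x : Vec n) (v : Vec m) : ℝ :=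
  ‖mulVec' Φ x‖ ^ 2 / ‖v‖ ^ 2

/-- A run of `N` iterations of Orthogonal Matching Pursuit on data `(Φ, y)`:
`idx (k+1) = t^{k+1}` is the index selected at iteration `k+1`, `sets k = T^k`,
`est k = x^k` and `res k = r^k`. -/
structure OMPRun {m n : ℕ} (Φ : Matrix (Fin m) (Fin n) ℝ) (y : Vec m) (N : ℕ) where
  idx : ℕ → Fin n
  sets : ℕ → Finset (Fin n)
  est : ℕ → Vec n
  res : ℕ → Vec m
  sets_zero : sets 0 = ∅
  est_zero : est 0 = 0
  res_zero : res 0 = y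
  idx_not_mem : ∀ k < N, idx (k + 1) ∉ sets k
  idx_max : ∀ k < N, ∀ i : Fin n, i ∉ sets k →
    |dot (col Φ i) (res k)| ≤ |dot (col Φ (idx (k + 1))) (res k)|
  sets_succ : ∀ k < N, sets (k + 1) = insert (idx (k + 1)) (sets k)
  est_supp : ∀ k < N, suppF (est (k + 1)) ⊆ sets (k + 1)
  est_min : ∀ k < N, ∀ u : Vec n, suppF u ⊆ sets (k + 1) →
    ‖y - mulVec' Φ (est (k + 1))‖ ≤ ‖y - mulVec' Φ u‖
  res_succ : ∀ k < N, res (k + 1) = y - mulVec' Φ (est (k + 1))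

/-- The vector `Φᵀ w` restricted to an index set `A` (the vector of correlations
`⟨φ_i, w⟩` for `i ∈ A`, zero outside `A`), as a Euclidean vector. -/
def colDots {m n : ℕ} (Φ : Matrix (Fin m) (Fin n) ℝ) (A : Finset (Fin n)) (w : Vec m) : Vec n :=
  WithLp.toLp 2 fun i => if i ∈ A then dot (col Φ i) w else 0

/-- The vector `Φᵀ w` of all column correlations, as a plain function (so `‖·‖`
is the sup/ℓ∞ norm). -/
def dualVec {m n : ℕ} (Φ : Matrix (Fin m) (Fin n) ℝ) (w : Vec m) : Fin n → ℝ :=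
  fun i => dot (col Φ i) w

/-- `P⊥_S w` : the projection of `w` onto the orthogonal complement of the span
of the columns of `Φ` indexed by `S`. -/
def perpProj {m n : ℕ} (Φ : Matrix (Fin m) (Fin n) ℝ) (S : Finset (Fin n)) (w : Vec m) : Vec m :=
  w - (Submodule.orthogonalProjectionOnto (Submodule.span ℝ (col Φ '' (S : Set (Fin n)))) w : Vec m)

/-- The `j`-th largest value (1-indexed) among `{|x i| : i ∈ Γ}` (with
multiplicities); `0` if `j > |Γ|` or `j = 0`. -/
def kthLargest {n : ℕ} (x : Vec n) (Γ : Finset (Fin n)) (j : ℕ) : ℝ :=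
  if 1 ≤ j ∧ j ≤ Γ.card then
    (Multiset.sort (Γ.val.map fun i => |x i|) (· ≤ ·)).getD (Γ.card - j) 0
  else 0

theorem aux_mulVec_one {m : ℕ} (u : Vec m) :
    mulVec' (1 : Matrix (Fin m) (Fin m) ℝ) u = u := by
  ext i
  simp [mulVec', Matrix.one_apply]

theorem aux_dot_one {m : ℕ} (i : Fin m) (u : Vec m) :
    dot (col (1 : Matrix (Fin m) (Fin m) ℝ) i) u = u i := by
  simp [dot, col, Matrix.one_apply]

theorem aux_min {m : ℕ} (y u : Vec m) (S : Finset (Fin m)) (hu : suppF u ⊆ S) :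
    ‖y - restrict y S‖ ≤ ‖y - u‖ := by
  rw [EuclideanSpace.norm_eq, EuclideanSpace.norm_eq]
  apply Real.sqrt_le_sqrt
  apply Finset.sum_le_sum
  intro i _
  by_cases hi : i ∈ S
  · simp [_root_.restrict, hi]
    positivity
  · have : u i = 0 := by
      by_contra h
      exact hi (hu (by simp [suppF, h]))
    simp [_root_.restrict, hi, this]

theorem aux_run {K m : ℕ} (hm : K < m) (y : Vec m) (lst : Fin m)
    (hl : (lst : ℕ) = m - 1)
    (hy1 : ∀ i : Fin m, (i : ℕ) < K ∨ i = lst → y i = 1)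
    (hy0 : ∀ i : Fin m, |y i| ≤ 1) :
    ∃ run : OMPRun (1 : Matrix (Fin m) (Fin m) ℝ) y K, run.idx 1 = lst := by
  classical
  let S : ℕ → Finset (Fin m) := fun k =>
    Finset.univ.filter fun i => (i : ℕ) + 1 < k ∨ (i = lst ∧ 0 < k)
  let ix : ℕ → Fin m := fun k =>
    if k ≤ 1 then lst else if h : k - 2 < m then ⟨k - 2, h⟩ else lst
  have hix : ∀ k < K, (k = 0 ∧ ix (k + 1) = lst) ∨
      (0 < k ∧ ((ix (k + 1) : Fin m) : ℕ) + 1 = k) := by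
    intro k hk
    rcases Nat.eq_zero_or_pos k with h0 | h0
    · left
      subst h0
      simp [ix]
    · right
      refine ⟨h0, ?_⟩
      have h1 : ¬ (k + 1 ≤ 1) := by omega
      have h2 : k + 1 - 2 < m := by omega
      simp only [ix, if_neg h1, dif_pos h2]
      omega
  have hnot : ∀ k < K, ix (k + 1) ∉ S k := by
    intro k hk
    simp only [S, Finset.mem_filter, Finset.mem_univ, true_and, Fin.ext_iff]
    rcases hix k hk with ⟨h, _⟩ | ⟨h, h'⟩ <;> omega
  have hone : ∀ k < K, y (ix (k + 1)) = 1 := by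
    intro k hk
    apply hy1
    rcases hix k hk with ⟨_, h⟩ | ⟨h, h'⟩
    · exact Or.inr h
    · left; omega
  refine ⟨{ idx := ix, sets := S, est := fun k => restrict y (S k)
            res := fun k => y - restrict y (S k)
            sets_zero := ?_, est_zero := ?_, res_zero := ?_, idx_not_mem := hnot
            idx_max := ?_, sets_succ := ?_, est_supp := ?_, est_min := ?_, res_succ := ?_ }, ?_⟩
  · simp [S]
  · ext i; simp [_root_.restrict, S]
  · ext i; simp [_root_.restrict, S]
  · intro k hk i hi
    rw [aux_dot_one, aux_dot_one]
    have h1 := hnot k hk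
    simp [_root_.restrict, hi, h1, hone k hk, hy0 i]
  · intro k hk
    ext i
    simp only [S, Finset.mem_filter, Finset.mem_univ, true_and, Finset.mem_insert, Fin.ext_iff]
    rcases hix k hk with ⟨h, h'⟩ | ⟨h, h'⟩
    · rw [h']; omega
    · omega
  · intro k hk i hi
    by_contra h
    simp [suppF, _root_.restrict, h] at hi
  · intro k hk u hu
    rw [aux_mulVec_one, aux_mulVec_one]
    exact aux_min y u _ hu
  · intro k hk
    rw [aux_mulVec_one]
  · simp [ix]

/-- the explicit counterexample with identity matrix: `δ_{K+1} = 0`,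
`SNR = K`, `MAR = 1`, the index `m` attains the maximal correlation with `y`,
and some run of OMP selects `t¹ = m ∉ supp(x)`. -/
theorem stmt2 (K m : ℕ) (hK : 1 ≤ K) (hm : K < m) :
    let Φ : Matrix (Fin m) (Fin m) ℝ := 1
    let x : Vec m := WithLp.toLp 2 fun i => if (i : ℕ) < K then 1 else 0
    let lst : Fin m := ⟨m - 1, by omega⟩
    let v : Vec m := WithLp.toLp 2 fun i => if i = lst then 1 else 0
    let y : Vec m := mulVec' Φ x + v
    RIPConst Φ (K + 1) 0 ∧
    SNR Φ x v = K ∧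
    (∃ hne : (suppF x).Nonempty,
      ((suppF x).inf' hne fun j => |x j| ^ 2) / (‖x‖ ^ 2 / K) = 1) ∧
    lst ∉ suppF x ∧
    (∀ i : Fin m, |dot (col Φ i) y| ≤ |dot (col Φ lst) y|) ∧
    ∃ run : OMPRun Φ y K, run.idx 1 = lst := by
  intro Φ x lst v y
  have hyx : y = x + v := by simp only [y, Φ, aux_mulVec_one]
  have hx2 : ‖x‖ ^ 2 = K := by
    rw [EuclideanSpace.norm_sq_eq]
    simp [x, ite_pow]
    rw [Fin.card_filter_val_lt]
    omega
  have hv2 : ‖v‖ ^ 2 = 1 := by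
    rw [EuclideanSpace.norm_sq_eq]
    simp [v, ite_pow]
  have hK0 : (K : ℝ) ≠ 0 := by positivity
  have hy1 : ∀ i : Fin m, (i : ℕ) < K ∨ i = lst → y i = 1 := by
    intro i hi
    rw [hyx]
    simp only [x, v, lst, PiLp.add_apply, Fin.ext_iff] at hi ⊢
    split_ifs <;> first | omega | norm_num
  have hy0 : ∀ i : Fin m, |y i| ≤ 1 := by
    intro i
    rw [hyx]
    simp only [x, v, lst, PiLp.add_apply, Fin.ext_iff]
    split_ifs <;> first | omega | norm_num
  refine ⟨⟨⟨le_rfl, fun u _ => ?_⟩, fun c hc => hc.1⟩, ?_, ?_, ?_, ?_, ?_⟩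
  · simp [Φ, aux_mulVec_one]
  · simp only [SNR, Φ, aux_mulVec_one, hx2, hv2, div_one]
  · have hne : (suppF x).Nonempty := ⟨⟨0, by omega⟩, by simp [suppF, x]; omega⟩
    refine ⟨hne, ?_⟩
    have : ((suppF x).inf' hne fun j => |x j| ^ 2) = 1 := by
      rw [Finset.inf'_congr hne rfl (g := fun _ => (1 : ℝ)), Finset.inf'_const]
      intro i hi
      simp [suppF, x] at hi
      simp [x, hi]
    rw [this, hx2, div_self hK0, div_one]
  · simp [suppF, x, lst]; omega
  · intro i
    simp only [Φ, aux_dot_one]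
    rw [hy1 lst (Or.inr rfl), abs_one]
    exact hy0 i
  · exact aux_run hm y lst rfl hy1 hy0

end
end

section
/- There exists an absolute constant C > 0 with the following property. Let Φ ∈ ℝ^{m×n} have restricted isometry constant δ := δ_{2K} ∈ (0,1) of order 2K, let x ∈ ℝ^n be K-sparse with support T, |T| = K ≥ 1, whose nonzero elements all have equal magnitude, and let y = Φx + v with v ≠ 0. If SNR ≥ δ^{−3/2}, then every run of K iterations of OMP applied to (Φ, y) recovers the support of x with error rate ρ_error := |T^K \ T| / K ≤ C·δ^{1/2}. -/
noncomputable section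
open Finset

lemma le_of_sq_le_sq' {p q : ℝ} (h : p ^ 2 ≤ q ^ 2) (hq : 0 ≤ q) : p ≤ q :=
  abs_le_of_sq_le_sq' h hq |>.2

lemma dot_eq_inner {n : ℕ} (u v : Vec n) : dot u v = inner ℝ u v := by
  simp [dot, PiLp.inner_apply, mul_comm]

lemma mulVec_eq_sum {m n : ℕ} (Φ : Matrix (Fin m) (Fin n) ℝ) (x : Vec n) :
    mulVec' Φ x = ∑ j, x j • col Φ j := by
  ext i
  simp [mulVec', col, mul_comm]

lemma mulVec_sub {m n : ℕ} (Φ : Matrix (Fin m) (Fin n) ℝ) (x z : Vec n) :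
    mulVec' Φ (x - z) = mulVec' Φ x - mulVec' Φ z := by
  simp [mulVec_eq_sum, sub_smul]

lemma mulVec_add {m n : ℕ} (Φ : Matrix (Fin m) (Fin n) ℝ) (x z : Vec n) :
    mulVec' Φ (x + z) = mulVec' Φ x + mulVec' Φ z := by
  simp [mulVec_eq_sum, add_smul, Finset.sum_add_distrib]

lemma mulVec_single {m n : ℕ} (Φ : Matrix (Fin m) (Fin n) ℝ) (j : Fin n) (c : ℝ) :
    mulVec' Φ (EuclideanSpace.single j c) = c • col Φ j := by
  rw [mulVec_eq_sum, Finset.sum_eq_single j]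
  · simp
  · intro b _ hb
    simp [hb]
  · simp

lemma inner_mulVec {m n : ℕ} (Φ : Matrix (Fin m) (Fin n) ℝ) (w : Vec n) (r : Vec m) :
    inner ℝ (mulVec' Φ w) r = ∑ j, w j * inner ℝ (col Φ j) r := by
  rw [mulVec_eq_sum, sum_inner]
  simp [inner_smul_left]

lemma mem_suppF {n : ℕ} (x : Vec n) (i : Fin n) : i ∈ suppF x ↔ x i ≠ 0 := by
  simp [suppF]

lemma norm_sub_smul_sq {m : ℕ} (r p : Vec m) (c : ℝ) :
    ‖r - c • p‖ ^ 2 = ‖r‖ ^ 2 - 2 * c * inner ℝ p r + c ^ 2 * ‖p‖ ^ 2 := by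
  rw [norm_sub_sq_real, inner_smul_right, norm_smul, mul_pow, Real.norm_eq_abs, sq_abs,
    real_inner_comm]
  ring

/-- A step of size `c = d / B` with `‖p‖² ≤ B`. -/
lemma step_dec {m : ℕ} (r p : Vec m) (B : ℝ) (hB : 0 < B) (hp : ‖p‖ ^ 2 ≤ B) :
    ‖r - ((inner ℝ p r : ℝ) / B) • p‖ ^ 2 ≤ ‖r‖ ^ 2 - (inner ℝ p r : ℝ) ^ 2 / B := by
  rw [norm_sub_smul_sq]
  have h1 : ((inner ℝ p r : ℝ) / B) ^ 2 * ‖p‖ ^ 2 ≤ ((inner ℝ p r : ℝ) / B) ^ 2 * B :=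
    mul_le_mul_of_nonneg_left hp (sq_nonneg _)
  have h2 : ((inner ℝ p r : ℝ) / B) ^ 2 * B = (inner ℝ p r : ℝ) ^ 2 / B := by
    field_simp
  have h3 : 2 * ((inner ℝ p r : ℝ) / B) * inner ℝ p r = 2 * ((inner ℝ p r : ℝ) ^ 2 / B) := by
    ring
  linarith

/-- If `r` cannot be shortened by subtracting multiples of `p`, then `p ⟂ r`. -/
lemma orth_of_min {m : ℕ} (r p : Vec m) (h : ∀ c : ℝ, ‖r‖ ≤ ‖r - c • p‖) :
    inner ℝ p r = (0 : ℝ) := by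
  have hB : 0 < ‖p‖ ^ 2 + 1 := by positivity
  have h1 := step_dec r p (‖p‖ ^ 2 + 1) hB (by linarith)
  have h2 := h ((inner ℝ p r : ℝ) / (‖p‖ ^ 2 + 1))
  have h3 : ‖r‖ ^ 2 ≤ ‖r - ((inner ℝ p r : ℝ) / (‖p‖ ^ 2 + 1)) • p‖ ^ 2 := by gcongr
  have h4 : (inner ℝ p r : ℝ) ^ 2 / (‖p‖ ^ 2 + 1) ≤ 0 := by linarith
  have h5 : (inner ℝ p r : ℝ) ^ 2 ≤ 0 := by
    rw [div_le_iff₀ hB] at h4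
    linarith
  exact pow_eq_zero_iff (two_ne_zero) |>.1 (le_antisymm h5 (sq_nonneg _))

section Run
variable {m n N : ℕ} {Φ : Matrix (Fin m) (Fin n) ℝ} {y : Vec m}

lemma run_res (run : OMPRun Φ y N) (k : ℕ) (hk : k ≤ N) :
    run.res k = y - mulVec' Φ (run.est k) := by
  cases k with
  | zero => rw [run.res_zero, run.est_zero]; simp [mulVec_eq_sum]
  | succ k => exact run.res_succ k hk

lemma run_supp (run : OMPRun Φ y N) (k : ℕ) (hk : k ≤ N) :
    suppF (run.est k) ⊆ run.sets k := by
  cases k with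
  | zero => rw [run.est_zero]; simp [suppF]
  | succ k => exact run.est_supp k hk

lemma run_min (run : OMPRun Φ y N) (k : ℕ) (hk : k ≤ N) (u : Vec n)
    (hu : suppF u ⊆ run.sets k) : ‖run.res k‖ ≤ ‖y - mulVec' Φ u‖ := by
  rw [run_res run k hk]
  cases k with
  | zero =>
    have : u = 0 := by
      ext i
      by_contra h
      have := hu ((mem_suppF u i).2 h)
      rw [run.sets_zero] at this
      simp at this
    rw [this, run.est_zero]
  | succ k => exact run.est_min k hk u hu

lemma run_card (run : OMPRun Φ y N) (k : ℕ) (hk : k ≤ N) : (run.sets k).card = k := by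
  induction k with
  | zero => simp [run.sets_zero]
  | succ k ih =>
    rw [run.sets_succ k hk, Finset.card_insert_of_notMem (run.idx_not_mem k hk),
      ih (by omega)]

lemma run_mono (run : OMPRun Φ y N) (k d : ℕ) (hk : k + d ≤ N) :
    run.sets k ⊆ run.sets (k + d) := by
  induction d with
  | zero => simp
  | succ d ih =>
    rw [← add_assoc, run.sets_succ (k + d) (by omega)]
    exact (ih (by omega)).trans (Finset.subset_insert _ _)

lemma supp_add_single {A : Finset (Fin n)} (u : Vec n) (hu : suppF u ⊆ A) (j : Fin n) (c : ℝ)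
    (hj : j ∈ A) : suppF (u + EuclideanSpace.single j c) ⊆ A := by
  intro i hi
  rw [mem_suppF] at hi
  by_cases hij : i = j
  · rw [hij]; exact hj
  · apply hu
    rw [mem_suppF]
    simpa [hij] using hi

lemma run_orth (run : OMPRun Φ y N) (k : ℕ) (hk : k ≤ N) (i : Fin n) (hi : i ∈ run.sets k) :
    inner ℝ (col Φ i) (run.res k) = (0 : ℝ) := by
  apply orth_of_min
  intro c
  have h := run_min run k hk (run.est k + EuclideanSpace.single i c)
    (supp_add_single _ (run_supp run k hk) i c hi)
  rwa [mulVec_add, mulVec_single, ← sub_sub, ← run_res run k hk] at h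

lemma run_dec (run : OMPRun Φ y N) (k : ℕ) (hk : k < N) (B : ℝ) (hB : 0 < B)
    (hp : ∀ j, ‖col Φ j‖ ^ 2 ≤ B) :
    ‖run.res (k + 1)‖ ^ 2 ≤ ‖run.res k‖ ^ 2
      - (inner ℝ (col Φ (run.idx (k + 1))) (run.res k) : ℝ) ^ 2 / B := by
  set j := run.idx (k + 1) with hj
  set c := (inner ℝ (col Φ j) (run.res k) : ℝ) / B with hc
  have hmem : j ∈ run.sets (k + 1) := by
    rw [run.sets_succ k hk]; exact Finset.mem_insert_self _ _
  have hsub : run.sets k ⊆ run.sets (k + 1) := run_mono run k 1 hk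
  have h := run_min run (k + 1) hk (run.est k + EuclideanSpace.single j c)
    (supp_add_single _ ((run_supp run k hk.le).trans hsub) j c hmem)
  rw [mulVec_add, mulVec_single, ← sub_sub, ← run_res run k hk.le] at h
  have h2 : ‖run.res (k + 1)‖ ^ 2 ≤ ‖run.res k - c • col Φ j‖ ^ 2 := by gcongr
  exact h2.trans (step_dec _ _ B hB (hp j))

/-- Correlation of the estimation error with the residual. -/
lemma run_corr (run : OMPRun Φ y N) (k : ℕ) (hk : k < N) (x : Vec n) (T : Finset (Fin n))
    (hT : suppF x = T) (a : ℝ) (ha : ∀ i ∈ T, |x i| = a) :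
    inner ℝ (mulVec' Φ (x - run.est k)) (run.res k)
      ≤ a * ((T \ run.sets k).card : ℝ) *
        |(inner ℝ (col Φ (run.idx (k + 1))) (run.res k) : ℝ)| := by
  rw [inner_mulVec]
  have hz : ∑ j, (x - run.est k) j * (inner ℝ (col Φ j) (run.res k) : ℝ)
      = ∑ j ∈ T \ run.sets k, x j * (inner ℝ (col Φ j) (run.res k) : ℝ) := by
    symm
    rw [← Finset.sum_subset (Finset.subset_univ (T \ run.sets k))]
    · apply Finset.sum_congr rfl
      intro j hj
      have h0 : run.est k j = 0 := by
        by_contra h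
        exact (Finset.mem_sdiff.1 hj).2 (run_supp run k hk.le ((mem_suppF _ _).2 h))
      simp [h0]
    · intro j _ hj
      by_cases hjs : j ∈ run.sets k
      · rw [run_orth run k hk.le j hjs, mul_zero]
      · have hjT : j ∉ T := fun h => hj (Finset.mem_sdiff.2 ⟨h, hjs⟩)
        have h0 : run.est k j = 0 := by
          by_contra h
          exact hjs (run_supp run k hk.le ((mem_suppF _ _).2 h))
        have h1 : x j = 0 := by
          by_contra h
          exact hjT (hT ▸ (mem_suppF _ _).2 h)
        simp [h0, h1]
  rw [hz]
  calc _ ≤ ∑ j ∈ T \ run.sets k,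
        a * |(inner ℝ (col Φ (run.idx (k + 1))) (run.res k) : ℝ)| := by
        apply Finset.sum_le_sum
        intro j hj
        obtain ⟨h1, h2⟩ := Finset.mem_sdiff.1 hj
        have h3 := run.idx_max k hk j h2
        rw [dot_eq_inner, dot_eq_inner] at h3
        refine (le_abs_self _).trans ?_
        rw [abs_mul, ha j h1]
        exact mul_le_mul_of_nonneg_left h3 (by rw [← ha j h1]; exact abs_nonneg _)
    _ = _ := by
        rw [Finset.sum_const, nsmul_eq_mul]; ring

/-- Norm of the estimation error. -/
lemma run_err (run : OMPRun Φ y N) (k : ℕ) (hk : k ≤ N) (x : Vec n) (T : Finset (Fin n))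
    (a : ℝ) (ha : ∀ i ∈ T, |x i| = a) :
    a ^ 2 * ((T \ run.sets k).card : ℝ) ≤ ‖x - run.est k‖ ^ 2 := by
  rw [EuclideanSpace.real_norm_sq_eq]
  calc a ^ 2 * ((T \ run.sets k).card : ℝ) = ∑ j ∈ T \ run.sets k, a ^ 2 := by
        rw [Finset.sum_const, nsmul_eq_mul]; ring
    _ = ∑ j ∈ T \ run.sets k, ((x - run.est k) j) ^ 2 := by
        apply Finset.sum_congr rfl
        intro j hj
        obtain ⟨h1, h2⟩ := Finset.mem_sdiff.1 hj
        have h0 : run.est k j = 0 := by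
          by_contra h
          exact h2 (run_supp run k hk ((mem_suppF _ _).2 h))
        rw [← ha j h1]
        simp [h0]
    _ ≤ _ := Finset.sum_le_sum_of_subset_of_nonneg (Finset.subset_univ _)
        (fun _ _ _ => sq_nonneg _)

end Run

/-- Elementary norm bounds. -/
lemma num_basic (s G P V : ℝ) (hs : 0 < s) (hs1 : s ≤ 1 / 16) (hG : 0 ≤ G) (hP : 0 ≤ P)
    (h1 : (1 - s ^ 2) * G ^ 2 ≤ P ^ 2) (h2 : V ^ 2 ≤ 2 * s ^ 2 * G ^ 2) :
    (1 - s ^ 2) * G ≤ P ∧ V ≤ 3 / 2 * s * G := by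
  have hs2 : 0 ≤ 1 - s ^ 2 := by nlinarith
  constructor
  · refine le_of_sq_le_sq' ?_ hP
    have : (1 - s ^ 2) ^ 2 ≤ 1 - s ^ 2 := by nlinarith [sq_nonneg s]
    calc ((1 - s ^ 2) * G) ^ 2 = (1 - s ^ 2) ^ 2 * G ^ 2 := by ring
      _ ≤ (1 - s ^ 2) * G ^ 2 := mul_le_mul_of_nonneg_right this (sq_nonneg _)
      _ ≤ _ := h1
  · refine le_of_sq_le_sq' ?_ (by positivity)
    have : 0 ≤ s ^ 2 * G ^ 2 := by positivity
    nlinarith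

lemma num_step (s G P V : ℝ) (hs : 0 < s) (hs1 : s ≤ 1 / 16) (hG : 0 ≤ G) (hP : 0 ≤ P)
    (h1 : (1 - s ^ 2) * G ^ 2 ≤ P ^ 2) (h2 : V ^ 2 ≤ 2 * s ^ 2 * G ^ 2) :
    (1 - 4 * s) * G ^ 2 ≤ P ^ 2 - P * V ∧ G / 2 ≤ P - V := by
  obtain ⟨a1, a2⟩ := num_basic s G P V hs hs1 hG hP h1 h2
  have hs2 : 0 ≤ 1 - s ^ 2 := by nlinarith
  have hq : 0 ≤ 1 - s ^ 2 - 3 / 2 * s := by nlinarith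
  have a3 : (1 - s ^ 2 - 3 / 2 * s) * G ≤ P - V := by nlinarith
  constructor
  · have a4 : ((1 - s ^ 2) * G) * ((1 - s ^ 2 - 3 / 2 * s) * G) ≤ P * (P - V) :=
      mul_le_mul a1 a3 (by positivity) hP
    have a5 : 1 - 4 * s ≤ (1 - s ^ 2) * (1 - s ^ 2 - 3 / 2 * s) := by
      nlinarith [pow_pos hs 2, pow_pos hs 3, pow_pos hs 4]
    have a6 := mul_le_mul_of_nonneg_right a5 (sq_nonneg G)
    nlinarith
  · have : (1 : ℝ) / 2 ≤ 1 - s ^ 2 - 3 / 2 * s := by nlinarith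
    nlinarith [mul_le_mul_of_nonneg_right this hG]

set_option maxHeartbeats 2000000

/-- approximate support recovery for signals with nonzero entries
of equal magnitude: if `SNR ≥ δ^{-3/2}` then the error rate is `≤ C δ^{1/2}`. -/
theorem stmt4 : ∃ C : ℝ, 0 < C ∧
    ∀ (m n K : ℕ) (Φ : Matrix (Fin m) (Fin n) ℝ) (δ : ℝ) (x : Vec n) (v y : Vec m)
      (T : Finset (Fin n)),
      suppF x = T → T.card = K → 1 ≤ K →
      (∀ i ∈ T, ∀ j ∈ T, |x i| = |x j|) →
      RIPConst Φ (2 * K) δ → 0 < δ → δ < 1 →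
      v ≠ 0 → y = mulVec' Φ x + v →
      SNR Φ x v ≥ δ ^ (-(3 : ℝ) / 2) →
      ∀ run : OMPRun Φ y K,
        ((run.sets K \ T).card : ℝ) / K ≤ C * δ ^ ((1 : ℝ) / 2) := by
  refine ⟨52, by norm_num, ?_⟩
  intro m n K Φ δ x v y T hT hTK hK heq hrip hδ hδ1 hv hy hsnr run
  have hKpos : (0 : ℝ) < K := by exact_mod_cast hK
  obtain ⟨s, hs, hsδ⟩ : ∃ s : ℝ, 0 < s ∧ δ = s ^ 2 :=
    ⟨√δ, Real.sqrt_pos.2 hδ, (Real.sq_sqrt hδ.le).symm⟩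
  have hpow1 : δ ^ ((1 : ℝ) / 2) = s := by
    rw [← Real.sqrt_eq_rpow, hsδ, Real.sqrt_sq hs.le]
  have hpow2 : δ ^ (-(3 : ℝ) / 2) = (s ^ 3)⁻¹ := by
    rw [hsδ, ← Real.rpow_natCast, ← Real.rpow_mul hs.le, ← Real.rpow_natCast,
      ← Real.rpow_neg hs.le]
    norm_num
  rw [hpow1, div_le_iff₀ hKpos]
  rw [hpow2] at hsnr
  have hcardK := run_card run K le_rfl
  have hle : ((run.sets K \ T).card : ℝ) ≤ K := by
    have := Finset.card_le_card (Finset.sdiff_subset : run.sets K \ T ⊆ run.sets K)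
    rw [hcardK] at this
    exact_mod_cast this
  have hbb : (run.sets K \ T).card = (T \ run.sets K).card :=
    Finset.card_sdiff_comm (by rw [hcardK, hTK])
  rcases lt_or_ge (1 / 16) s with hbig | hs1
  · nlinarith
  rw [hbb]
  set b : ℝ := ((T \ run.sets K).card : ℝ) with hb
  rcases le_or_gt b (s * K) with hsm | hbs
  · nlinarith [mul_pos hs hKpos]
  -- the common magnitude
  obtain ⟨i0, hi0⟩ : T.Nonempty := Finset.card_pos.1 (by omega)
  set a : ℝ := |x i0| with ha0
  have ha : ∀ i ∈ T, |x i| = a := fun i hi => heq i hi i0 hi0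
  have hapos : 0 < a := by
    rw [ha0, abs_pos]
    rw [← hT] at hi0
    exact (mem_suppF _ _).1 hi0
  have hxnorm : ‖x‖ ^ 2 = a ^ 2 * K := by
    rw [EuclideanSpace.real_norm_sq_eq, ← Finset.sum_subset (Finset.subset_univ T)]
    · rw [Finset.sum_congr rfl (fun j hj => by rw [← sq_abs, ha j hj]), Finset.sum_const, hTK,
        nsmul_eq_mul, mul_comm]
    · intro j _ hj
      rw [← hT, mem_suppF, not_not] at hj
      simp [hj]
  obtain ⟨⟨-, hR⟩, -⟩ := hrip
  rw [hsδ] at hR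
  have hPhix : ‖mulVec' Φ x‖ ^ 2 ≤ (1 + s ^ 2) * (a ^ 2 * K) := by
    rw [← hxnorm]
    exact (hR x (by rw [hT, hTK]; omega)).2
  have hcol : ∀ j, ‖col Φ j‖ ^ 2 ≤ 1 + s ^ 2 := by
    intro j
    have h := (hR (EuclideanSpace.single j 1) (by
      have : suppF (EuclideanSpace.single j (1 : ℝ)) ⊆ {j} := by
        intro i hi
        rw [mem_suppF] at hi
        by_contra h
        apply hi
        simp at h
        simp [h]
      have := Finset.card_le_card this
      simp at this
      omega)).2
    rw [mulVec_single] at h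
    simpa using h
  have hvpos : 0 < ‖v‖ ^ 2 := by positivity
  have hV : ‖v‖ ^ 2 ≤ s ^ 3 * ‖mulVec' Φ x‖ ^ 2 := by
    unfold SNR at hsnr
    rw [ge_iff_le, le_div_iff₀ hvpos, inv_mul_le_iff₀ (by positivity)] at hsnr
    exact hsnr
  have hs3 : 0 < s ^ 3 := by positivity
  -- noise versus the remaining part
  have hVb : ‖v‖ ^ 2 ≤ 2 * s ^ 2 * (a ^ 2 * b) := by
    have e1 : s ^ 3 * ‖mulVec' Φ x‖ ^ 2 ≤ s ^ 3 * (2 * (a ^ 2 * K)) := by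
      apply mul_le_mul_of_nonneg_left _ hs3.le
      refine hPhix.trans ?_
      apply mul_le_mul_of_nonneg_right _ (by positivity)
      nlinarith
    have e2 : (2 * s ^ 2 * a ^ 2) * (s * K) ≤ (2 * s ^ 2 * a ^ 2) * b :=
      mul_le_mul_of_nonneg_left hbs.le (by positivity)
    nlinarith
  have hres : ∀ k ≤ K, run.res k = mulVec' Φ (x - run.est k) + v := by
    intro k hk
    rw [run_res run k hk, mulVec_sub, sub_add_eq_add_sub, ← hy]
  -- bounds at every iteration
  have hstep : ∀ k ≤ K, (1 - 4 * s) * (a ^ 2 * ((T \ run.sets k).card : ℝ)) ≤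
        ‖mulVec' Φ (x - run.est k)‖ ^ 2 - ‖mulVec' Φ (x - run.est k)‖ * ‖v‖ ∧
      a * √((T \ run.sets k).card : ℝ) / 2 ≤ ‖mulVec' Φ (x - run.est k)‖ - ‖v‖ ∧
      b ≤ ((T \ run.sets k).card : ℝ) := by
    intro k hk
    have hbk : b ≤ ((T \ run.sets k).card : ℝ) := by
      rw [hb]
      have h := run_mono run k (K - k) (by omega)
      rw [show k + (K - k) = K by omega] at h
      exact_mod_cast Finset.card_le_card (Finset.sdiff_subset_sdiff le_rfl h)
    set g : ℝ := ((T \ run.sets k).card : ℝ) with hg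
    have hg0 : 0 ≤ g := by positivity
    have hG2 : (a * √g) ^ 2 = a ^ 2 * g := by rw [mul_pow, Real.sq_sqrt hg0]
    have hcard : (suppF (x - run.est k)).card ≤ 2 * K := by
      have hsub : suppF (x - run.est k) ⊆ T ∪ run.sets k := by
        intro i hi
        by_contra h
        rw [Finset.mem_union, not_or] at h
        obtain ⟨h1, h2⟩ := h
        rw [mem_suppF] at hi
        have e1 : x i = 0 := by
          rw [← hT, mem_suppF, not_not] at h1
          exact h1
        have e2 : run.est k i = 0 := by
          by_contra h
          exact h2 (run_supp run k hk ((mem_suppF _ _).2 h))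
        apply hi
        simp [e1, e2]
      have h1 := Finset.card_le_card hsub
      have h2 := Finset.card_union_le T (run.sets k)
      rw [run_card run k hk] at h2
      omega
    have hlow := (hR _ hcard).1
    have herr := run_err run k hk x T a ha
    rw [← hg] at herr
    have h := num_step s (a * √g) ‖mulVec' Φ (x - run.est k)‖ ‖v‖ hs hs1 (by positivity)
      (norm_nonneg _)
      (by
        rw [hG2]
        exact (mul_le_mul_of_nonneg_left herr (by nlinarith)).trans hlow)
      (by
        rw [hG2]
        refine hVb.trans ?_
        gcongr)
    rw [hG2] at h
    exact ⟨h.1, h.2, hbk⟩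
  have hbpos : 0 < b := lt_trans (mul_pos hs hKpos) hbs
  have hdec : ∀ k < K, ‖run.res (k + 1)‖ ^ 2 ≤ ‖run.res k‖ ^ 2 - a ^ 2 * (1 - 9 * s) := by
    intro k hk
    have hd := run_dec run k hk (1 + s ^ 2) (by positivity) hcol
    have hc := run_corr run k hk x T hT a ha
    obtain ⟨h1, -, h3⟩ := hstep k hk.le
    set D : ℝ := inner ℝ (col Φ (run.idx (k + 1))) (run.res k) with hD
    set g : ℝ := ((T \ run.sets k).card : ℝ) with hg
    have hgpos : 0 < g := lt_of_lt_of_le hbpos h3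
    have h4 : ‖mulVec' Φ (x - run.est k)‖ ^ 2 - ‖mulVec' Φ (x - run.est k)‖ * ‖v‖ ≤
        inner ℝ (mulVec' Φ (x - run.est k)) (run.res k) := by
      rw [hres k hk.le, inner_add_right, real_inner_self_eq_norm_sq]
      have := (abs_le.1 (abs_real_inner_le_norm (mulVec' Φ (x - run.est k)) v)).1
      linarith
    have h5 : (a * g) * (a * (1 - 4 * s)) ≤ (a * g) * |D| := by nlinarith
    have h6 : a * (1 - 4 * s) ≤ |D| := le_of_mul_le_mul_left h5 (by positivity)
    have h7 : (a * (1 - 4 * s)) ^ 2 ≤ D ^ 2 := by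
      rw [← sq_abs D]
      have : 0 ≤ a * (1 - 4 * s) := mul_nonneg hapos.le (by linarith)
      gcongr
    have h8 : a ^ 2 * (1 - 9 * s) ≤ D ^ 2 / (1 + s ^ 2) := by
      rw [le_div_iff₀ (by positivity)]
      have h9 : (1 - 9 * s) * (1 + s ^ 2) ≤ (1 - 4 * s) ^ 2 := by
        nlinarith [pow_pos hs 2, pow_pos hs 3]
      nlinarith [mul_le_mul_of_nonneg_left h9 (sq_nonneg a)]
    linarith
  have hsum : ∀ k ≤ K, ‖run.res k‖ ^ 2 ≤ ‖y‖ ^ 2 - k * (a ^ 2 * (1 - 9 * s)) := by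
    intro k
    induction k with
    | zero => intro _; simp [run.res_zero]
    | succ k ih =>
      intro hk
      have h1 := ih (by omega)
      have h2 := hdec k hk
      push_cast
      linarith
  have hy2 : ‖y‖ ^ 2 ≤ (1 + 4 * s) * (a ^ 2 * K) := by
    have e1 : ‖v‖ ≤ s * ‖mulVec' Φ x‖ := by
      refine le_of_sq_le_sq' ?_ (by positivity)
      refine hV.trans ?_
      rw [mul_pow]
      apply mul_le_mul_of_nonneg_right _ (sq_nonneg _)
      nlinarith [pow_pos hs 2]
    have e2 : ‖y‖ ≤ (1 + s) * ‖mulVec' Φ x‖ := by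
      rw [hy]
      have := norm_add_le (mulVec' Φ x) v
      linarith
    have e3 : ‖y‖ ^ 2 ≤ ((1 + s) * ‖mulVec' Φ x‖) ^ 2 := by gcongr
    have e4 : (1 + s) ^ 2 * ‖mulVec' Φ x‖ ^ 2 ≤ (1 + s) ^ 2 * ((1 + s ^ 2) * (a ^ 2 * K)) := by
      gcongr
    have e5 : (1 + s) ^ 2 * (1 + s ^ 2) ≤ 1 + 4 * s := by
      nlinarith [pow_pos hs 2, pow_pos hs 3, pow_pos hs 4]
    have e6 : (1 + s) ^ 2 * (1 + s ^ 2) * (a ^ 2 * K) ≤ (1 + 4 * s) * (a ^ 2 * K) := by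
      gcongr
    nlinarith
  have hfin : a ^ 2 * b / 4 ≤ ‖run.res K‖ ^ 2 := by
    obtain ⟨-, h2, -⟩ := hstep K le_rfl
    rw [← hb] at h2
    have h3 : a * √b / 2 ≤ ‖run.res K‖ := by
      refine h2.trans ?_
      rw [hres K le_rfl]
      have := norm_sub_le (mulVec' Φ (x - run.est K) + v) v
      rw [add_sub_cancel_right] at this
      linarith
    have h4 : (a * √b / 2) ^ 2 ≤ ‖run.res K‖ ^ 2 := by gcongr
    have h5 : (a * √b / 2) ^ 2 = a ^ 2 * b / 4 := by
      rw [div_pow, mul_pow, Real.sq_sqrt hbpos.le]; norm_num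
    linarith
  have hK' := hsum K le_rfl
  have hlast : a ^ 2 * b ≤ a ^ 2 * (52 * s * K) := by nlinarith
  exact le_of_mul_le_mul_left hlast (by positivity)

end
end
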